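/- arXiv:2502.08878 — 9 statements merged into one kernel-verified Lean document; each statement's English description precedes it below -/
import Mathlib

section
/- For every real constant C with 1 ≤ C ≤ 2 and every real y > 1, the infimum over x ∈ (0,1] of f(x;y) equals C/2 − 1/(2√y); that is, inf_{x ∈ (0,1]} (√y/x)·(1 − √(1 − Cx/√y + x/y)) = C/2 − 1/(2√y). -/
/-!
Put `s = √y > 1` and `a = (C s - 1) / s²`, so that `fMAD C y x = (s / x) (1 - √(1 - a x))` and the
claimed infimum is `s a / 2`. Here `0 < a` because `C s > 1`, and `a ≤ 1` because
`s² - C s + 1 ≥ (s - 1)² ≥ 0`. For `0 ≤ t ≤ 1` one has `t / 2 ≤ 1 - √(1 - t) ≤ t / 2 + t² / 2`; with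
`t = a x` this gives `s a / 2 ≤ fMAD C y x ≤ s a / 2 + s a² x / 2`. Hence `s a / 2` is a lower bound,
approached as `x → 0⁺`.
-/

/-- For a real constant `C`, a real `y > 1`, and `x ∈ (0,1]`,
`f(x;y) = (√y/x)·(1 − √(1 − Cx/√y + x/y))`. -/
noncomputable def fMAD (C y x : ℝ) : ℝ :=
  (Real.sqrt y / x) * (1 - Real.sqrt (1 - C * x / Real.sqrt y + x / y))

lemma half_le_one_sub_sqrt {t : ℝ} (h1 : t ≤ 1) : t / 2 ≤ 1 - √(1 - t) := by
  have h : √(1 - t) ≤ 1 - t / 2 :=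
    Real.sqrt_le_iff.mpr ⟨by linarith, by nlinarith [sq_nonneg t]⟩
  linarith

lemma one_sub_sqrt_le {t : ℝ} (h0 : 0 ≤ t) (h1 : t ≤ 1) :
    1 - √(1 - t) ≤ t / 2 + t ^ 2 / 2 := by
  have h : 1 - t / 2 - t ^ 2 / 2 ≤ √(1 - t) := by
    apply Real.le_sqrt_of_sq_le
    -- The difference of the two sides is `t² (1 - (1 + t)² / 4)`.
    have h2 : 0 ≤ t ^ 2 * (1 - (1 + t) ^ 2 / 4) :=
      mul_nonneg (sq_nonneg t) (by nlinarith)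
    nlinarith
  linarith

/-- For every real constant `C` with `1 ≤ C ≤ 2` and every real `y > 1`, the infimum over
`x ∈ (0,1]` of `f(x;y)` equals `C/2 − 1/(2√y)`. -/
theorem inf_fMAD_eq (C y : ℝ) (hC1 : 1 ≤ C) (hC2 : C ≤ 2) (hy : 1 < y) :
    sInf (fMAD C y '' Set.Ioc (0 : ℝ) 1) = C / 2 - 1 / (2 * Real.sqrt y) := by
  obtain ⟨s, hs⟩ : ∃ s, s = √y := ⟨_, rfl⟩
  have hs1 : 1 < s := by rw [hs]; exact Real.lt_sqrt_of_sq_lt (by linarith)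
  have hs0 : 0 < s := by linarith
  have hys : y = s ^ 2 := by rw [hs, Real.sq_sqrt (by linarith)]
  obtain ⟨a, ha⟩ : ∃ a, a = (C * s - 1) / s ^ 2 := ⟨_, rfl⟩
  have ha0 : 0 < a := by rw [ha]; exact div_pos (by nlinarith) (by positivity)
  have ha1 : a ≤ 1 := by
    rw [ha, div_le_one (by positivity)]
    nlinarith [sq_nonneg (s - 1)]
  have hf : ∀ x, fMAD C y x = s / x * (1 - √(1 - a * x)) := by
    intro x
    have h : 1 - C * x / s + x / y = 1 - a * x := by
      rw [ha, hys]; field_simp; ring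
    rw [fMAD, ← hs, h]
  have hL : C / 2 - 1 / (2 * √y) = s * a / 2 := by
    rw [← hs, ha]; field_simp
  rw [hL]
  apply csInf_eq_of_forall_ge_of_forall_gt_exists_lt
  · exact ⟨_, 1, by simp, rfl⟩
  · rintro _ ⟨x, ⟨hx0, hx1⟩, rfl⟩
    rw [hf]
    calc s * a / 2 = s / x * (a * x / 2) := by field_simp
      _ ≤ _ := by
        gcongr
        exact half_le_one_sub_sqrt (by nlinarith)
  · intro w hw
    -- This bound on `x` makes the error term `s a² x / 2` at most half of the gap `w - s a / 2`.
    obtain ⟨x, hx0, hx1, hxw⟩ : ∃ x : ℝ, 0 < x ∧ x ≤ 1 ∧ x ≤ (w - s * a / 2) / (s * a ^ 2) :=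
      ⟨min 1 ((w - s * a / 2) / (s * a ^ 2)),
        lt_min one_pos (div_pos (by linarith) (by positivity)), min_le_left _ _, min_le_right _ _⟩
    refine ⟨_, ⟨x, ⟨hx0, hx1⟩, rfl⟩, ?_⟩
    rw [le_div_iff₀ (by positivity)] at hxw
    rw [hf]
    calc s / x * (1 - √(1 - a * x)) ≤ s / x * (a * x / 2 + (a * x) ^ 2 / 2) := by
          gcongr
          exact one_sub_sqrt_le (by positivity) (by nlinarith)
      _ = s * a / 2 + x * (s * a ^ 2) / 2 := by field_simp
      _ < w := by linarith
end

section
/- For every real constant C with 1 ≤ C ≤ 2 and every real y > 1, the function x ↦ f(x;y) has no stationary points on (0,1]: its derivative with respect to x is nonzero at every x ∈ (0,1]. -/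
/-- For every real constant `C` with `1 ≤ C ≤ 2` and every real `y > 1`, the function
`x ↦ f(x;y)` has no stationary points on `(0,1]`: its derivative with respect to `x` is
nonzero at every `x ∈ (0,1]`. -/
theorem deriv_fMAD_ne_zero (C y : ℝ) (hC1 : 1 ≤ C) (hC2 : C ≤ 2) (hy : 1 < y) :
    ∀ x ∈ Set.Ioc (0 : ℝ) 1, deriv (fMAD C y) x ≠ 0 := by
  rintro x ⟨hx0, hx1⟩
  set s := Real.sqrt y with hs
  have hss : s ^ 2 = y := Real.sq_sqrt (by linarith)
  have hs1 : 1 < s := by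
    rw [hs]; exact Real.lt_sqrt_of_sq_lt (by linarith)
  have hs0 : 0 < s := by linarith
  set k := C / s - 1 / y with hk
  have hks : k = (C * s - 1) / s ^ 2 := by
    rw [hk, ← hss]; field_simp
  have hk0 : 0 < k := by
    rw [hks]; exact div_pos (by nlinarith) (by positivity)
  have hk1 : k < 1 := by
    rw [hks, div_lt_one (by positivity)]
    nlinarith [mul_pos (sub_pos.2 hs1) (sub_pos.2 hs1)]
  have hkx : 0 < k * x := mul_pos hk0 hx0
  have hu : 0 < 1 - k * x := by nlinarith
  have hf : fMAD C y = fun t => (s / t) * (1 - Real.sqrt (1 - k * t)) := by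
    funext t
    simp only [fMAD, ← hs]
    congr 3
    rw [hk]; ring
  set r := Real.sqrt (1 - k * x) with hr
  have hr0 : 0 < r := Real.sqrt_pos.2 hu
  have hrr : r ^ 2 = 1 - k * x := Real.sq_sqrt hu.le
  have hg : HasDerivAt (fun t => 1 - k * t) (-k) x := by
    simpa using ((hasDerivAt_id x).const_mul k).const_sub 1
  have hinv : HasDerivAt (fun t => s / t) (-s / x ^ 2) x := by
    simpa using (hasDerivAt_const x s).fun_div (hasDerivAt_id' x) hx0.ne'
  have hd := hinv.mul ((hg.sqrt hu.ne').const_sub 1)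
  have hd' : deriv (fMAD C y) x = -s / x ^ 2 * (1 - r) + s / x * (-(-k / (2 * r))) := by
    rw [hf]; exact hd.deriv
  rw [hd']
  intro h0
  field_simp at h0
  have h1 : (1 - r) ^ 2 = 0 := by nlinarith
  have h2 : r = 1 := by nlinarith [pow_eq_zero_iff (two_ne_zero) |>.1 h1]
  rw [h2] at hrr
  linarith
end

section
/- Let α, b_max, d_max, t, d_v be real numbers with 0 ≤ α ≤ 1, b_max ≥ 1, d_max ≥ 4, and 1 ≤ t ≤ d_v ≤ d_max. Then (α/d_max)·(1 − t/d_v) + b_max/√d_v ≤ b_max/√t. -/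
/-!
Put `a = √t ≤ b = √dv`. The difference of the two sides factors as
`(b - a) / b * (bmax / a - α * (a + b) / (dmax * b))`, so it suffices that
`α * (a + b) * a ≤ bmax * (dmax * b)`. Since `a ≤ b`, the left side is at most `2 * a * b`, and
`2 * a ≤ dmax` because `(2 * a) ^ 2 ≤ 4 * dmax ≤ dmax ^ 2`; the last step uses `4 ≤ dmax`.
-/

/-- Let `α, b_max, d_max, t, d_v` be real numbers with `0 ≤ α ≤ 1`, `b_max ≥ 1`, `d_max ≥ 4`,
and `1 ≤ t ≤ d_v ≤ d_max`. Then `(α/d_max)·(1 − t/d_v) + b_max/√d_v ≤ b_max/√t`. -/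
theorem reroute_linf_bound (α bmax dmax t dv : ℝ)
    (hα0 : 0 ≤ α) (hα1 : α ≤ 1) (hbmax : 1 ≤ bmax) (hdmax : 4 ≤ dmax)
    (ht : 1 ≤ t) (htdv : t ≤ dv) (hdv : dv ≤ dmax) :
    (α / dmax) * (1 - t / dv) + bmax / Real.sqrt dv ≤ bmax / Real.sqrt t := by
  obtain ⟨a, ha, rfl⟩ : ∃ a : ℝ, 1 ≤ a ∧ a ^ 2 = t :=
    ⟨√t, Real.one_le_sqrt.mpr ht, Real.sq_sqrt (by linarith)⟩
  obtain ⟨b, hb, rfl⟩ : ∃ b : ℝ, 1 ≤ b ∧ b ^ 2 = dv :=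
    ⟨√dv, Real.one_le_sqrt.mpr (ht.trans htdv), Real.sq_sqrt (by linarith)⟩
  have ha0 : 0 < a := by linarith
  have hb0 : 0 < b := by linarith
  have hd0 : 0 < dmax := by linarith
  rw [Real.sqrt_sq ha0.le, Real.sqrt_sq hb0.le]
  have hab : a ≤ b := (sq_le_sq₀ ha0.le hb0.le).mp htdv
  have h2a : 2 * a ≤ dmax := by nlinarith
  have hkey : α * (a + b) * a ≤ bmax * (dmax * b) :=
    calc α * (a + b) * a ≤ 1 * (b + b) * a := by gcongr
      _ = 1 * (2 * a * b) := by ring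
      _ ≤ bmax * (dmax * b) := by gcongr
  have hfac : 0 ≤ (b - a) / b * (bmax / a - α * (a + b) / (dmax * b)) := by
    refine mul_nonneg (div_nonneg (sub_nonneg.mpr hab) hb0.le) (sub_nonneg.mpr ?_)
    rwa [div_le_div_iff₀ (by positivity) ha0]
  have heq : bmax / a - (α / dmax * (1 - a ^ 2 / b ^ 2) + bmax / b)
      = (b - a) / b * (bmax / a - α * (a + b) / (dmax * b)) := by
    field_simp
    ring
  linarith
end

section
/- Let T = S_v ∖ (∪_{u ∈ I} S_u) be the set of novel items of the new user v, and suppose t = |T| ≥ 1. Then for every item i ∈ T, the final MAD weight on the neighboring input satisfies w'(i) ≤ b_max/√t. (Equivalently, the novel ℓ∞ sensitivity Δ_∞(t) of MAD is at most b_max/√t.) -/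
/-!
A novel item `i ∈ T` is held by the new user `v` alone, so every sum in its final weight has at
most one term. If `v` is not adaptive, the weight is `w_b^v(i) ≤ b_max/√|S_v| ≤ b_max/√t`. If `v`
is adaptive, the initial weight `1/|S_v| ≤ 1 ≤ τ` is not truncated and cancels against the
correction, so the weight is `w_b^v(i) + α e_v/d_max`. All novel items have excess fraction `0` and
all others at most `1`, so with `k = |S_v|` one has `e_v ≤ (k - t)/k`. Since `0 ≤ α ≤ 1 ≤ b_max`,
it remains to see that the rerouted amount `(k - t)/(k d_max)` is at most `1/√t - 1/√k`
(`sqrt_gap`), which follows from `k ≤ d_max` and `4 ≤ d_max`.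
-/

open Finset

/-- The set of adaptive users: those `u ∈ I` with `⌈1/b_min²⌉ ≤ |S_u| ≤ d_max`. -/
noncomputable def adaptSet {ι A : Type*} (I : Finset ι) (S : ι → Finset A)
    (bmin dmax : ℝ) : Finset ι :=
  I.filter (fun u => ⌈1 / bmin ^ 2⌉₊ ≤ (S u).card ∧ ((S u).card : ℝ) ≤ dmax)

/-- Initial weights: `w_init(i) = Σ_{u ∈ I_adapt, i ∈ S_u} 1/|S_u|`. -/
noncomputable def wInit {ι A : Type*} [DecidableEq A] (I : Finset ι) (S : ι → Finset A)
    (bmin dmax : ℝ) (i : A) : ℝ :=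
  ∑ u ∈ (adaptSet I S bmin dmax).filter (fun u => i ∈ S u), (1 : ℝ) / (S u).card

/-- Truncated weights: `w_trunc(i) = min{w_init(i), τ}`. -/
noncomputable def wTrunc {ι A : Type*} [DecidableEq A] (I : Finset ι) (S : ι → Finset A)
    (bmin dmax τ : ℝ) (i : A) : ℝ :=
  min (wInit I S bmin dmax i) τ

/-- Excess fraction: `r(i) = (w_init(i) − w_trunc(i))/w_init(i)` when `w_init(i) > 0`,
and `0` otherwise. -/
noncomputable def rFrac {ι A : Type*} [DecidableEq A] (I : Finset ι) (S : ι → Finset A)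
    (bmin dmax τ : ℝ) (i : A) : ℝ :=
  if 0 < wInit I S bmin dmax i then
    (wInit I S bmin dmax i - wTrunc I S bmin dmax τ i) / wInit I S bmin dmax i
  else 0

/-- Excess weight returned to a user: `e_u = (1/|S_u|)·Σ_{i ∈ S_u} r(i)`. -/
noncomputable def eUser {ι A : Type*} [DecidableEq A] (I : Finset ι) (S : ι → Finset A)
    (bmin dmax τ : ℝ) (u : ι) : ℝ :=
  (1 / ((S u).card : ℝ)) * ∑ i ∈ S u, rFrac I S bmin dmax τ i

/-- Rerouted weights: `w_reroute(i) = Σ_{u ∈ I_adapt, i ∈ S_u} α·e_u/d_max`. -/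
noncomputable def wReroute {ι A : Type*} [DecidableEq A] (I : Finset ι) (S : ι → Finset A)
    (bmin dmax τ α : ℝ) (i : A) : ℝ :=
  ∑ u ∈ (adaptSet I S bmin dmax).filter (fun u => i ∈ S u),
    α * eUser I S bmin dmax τ u / dmax

/-- Final MAD weight:
`w(i) = w_trunc(i) + w_reroute(i) + Σ_{u ∈ I_adapt, i ∈ S_u} (w_b^u(i) − 1/|S_u|)
      + Σ_{u ∈ I∖I_adapt, i ∈ S_u} w_b^u(i)`. -/
noncomputable def wFinal {ι A : Type*} [DecidableEq ι] [DecidableEq A] (I : Finset ι)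
    (S : ι → Finset A) (bmin dmax τ α : ℝ) (wb : ι → A → ℝ) (i : A) : ℝ :=
  wTrunc I S bmin dmax τ i + wReroute I S bmin dmax τ α i +
    (∑ u ∈ (adaptSet I S bmin dmax).filter (fun u => i ∈ S u),
      (wb u i - 1 / ((S u).card : ℝ))) +
    ∑ u ∈ (I \ adaptSet I S bmin dmax).filter (fun u => i ∈ S u), wb u i

/-- The gain `1/√t - 1/√k` from comparing with `t` instead of `k` items pays for the
rerouted weight. -/
lemma sqrt_gap {t k d : ℝ} (ht : 1 ≤ t) (htk : t ≤ k) (hkd : k ≤ d) (hd : 4 ≤ d) :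
    (k - t) / k / d ≤ 1 / √t - 1 / √k := by
  have hq : 0 < √t := Real.sqrt_pos.2 (by linarith)
  have hqs : √t ≤ √k := Real.sqrt_le_sqrt htk
  have hs : 0 < √k := by linarith
  have hq2 : √t ^ 2 = t := Real.sq_sqrt (by linarith)
  have hs2 : √k ^ 2 = k := Real.sq_sqrt (by linarith)
  set q := √t
  set s := √k
  rw [← hq2, ← hs2]
  have h2s : 2 * s ≤ d := by nlinarith
  -- After factoring `s² - q² = (s - q)(s + q)` only `(s + q) q ≤ s d` is needed.
  have key : (s + q) * q ≤ s * d := by nlinarith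
  rw [div_div, div_sub_div _ _ hq.ne' hs.ne',
    div_le_div_iff₀ (mul_pos (by positivity) (by linarith)) (by positivity)]
  nlinarith [mul_le_mul_of_nonneg_left key (mul_nonneg (sub_nonneg.2 hqs) hs.le)]

section

variable {ι A : Type*} [DecidableEq A] (J : Finset ι) (S : ι → Finset A) (bmin dmax : ℝ)

lemma rFrac_le_one {τ : ℝ} (hτ : 0 ≤ τ) (i : A) : rFrac J S bmin dmax τ i ≤ 1 := by
  unfold rFrac wTrunc
  split_ifs with h
  · rw [div_le_one h]
    linarith [le_min h.le hτ]
  · exact zero_le_one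

lemma rFrac_eq_zero {τ : ℝ} {i : A} (h : wInit J S bmin dmax i ≤ τ) :
    rFrac J S bmin dmax τ i = 0 := by
  simp [rFrac, wTrunc, min_eq_left h]

/-- If `T ⊆ S u` consists of untruncated items, the excess returned to `u` is at
most the proportion of items of `u` outside `T`. -/
lemma eUser_le {τ : ℝ} (hτ : 0 ≤ τ) {u : ι} {T : Finset A} (hT : T ⊆ S u)
    (h : ∀ i ∈ T, wInit J S bmin dmax i ≤ τ) :
    eUser J S bmin dmax τ u ≤ (((S u).card : ℝ) - T.card) / (S u).card := by
  have h1 : ∑ i ∈ S u, rFrac J S bmin dmax τ i ≤ ((S u).card : ℝ) - T.card := by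
    rw [← Finset.sum_sdiff hT,
      Finset.sum_eq_zero fun i hi => rFrac_eq_zero J S bmin dmax (h i hi), add_zero]
    calc ∑ i ∈ S u \ T, rFrac J S bmin dmax τ i
        ≤ ∑ _i ∈ S u \ T, (1 : ℝ) :=
          Finset.sum_le_sum fun i _ => rFrac_le_one J S bmin dmax hτ i
      _ = ((S u).card : ℝ) - T.card := by
          rw [Finset.sum_const, nsmul_eq_mul, mul_one, Finset.card_sdiff_of_subset hT,
            Nat.cast_sub (Finset.card_le_card hT)]
  unfold eUser
  rw [one_div, inv_mul_eq_div]
  exact div_le_div_of_nonneg_right h1 (Nat.cast_nonneg _)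

end

/-- **Novel ℓ∞ sensitivity of MAD.** Let `T = S_v ∖ (∪_{u ∈ I} S_u)` be the set of novel items
of the new user `v`, with `t = |T| ≥ 1`. Then for every item `i ∈ T`, the final MAD weight on
the neighboring input satisfies `w'(i) ≤ b_max/√t`. -/
theorem mad_novel_linf_sensitivity {ι A : Type*} [DecidableEq ι] [DecidableEq A]
    (I : Finset ι) (S : ι → Finset A) (v : ι) (hv : v ∉ I)
    (hne : ∀ u ∈ insert v I, (S u).Nonempty)
    (τ dmax bmin bmax α : ℝ)
    (hτ : 1 ≤ τ) (hdmax : 4 ≤ dmax) (hbmin1 : 1 / 2 ≤ bmin) (hbmin2 : bmin ≤ 1)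
    (hbmax : 1 ≤ bmax) (hα : α = bmin - 1 / (2 * Real.sqrt dmax))
    (wb : ι → A → ℝ)
    (hwb0 : ∀ u ∈ insert v I, ∀ i, i ∉ S u → wb u i = 0)
    (hwbl : ∀ u ∈ insert v I, ∀ i ∈ S u, bmin / Real.sqrt ((S u).card : ℝ) ≤ wb u i)
    (hwbu : ∀ u ∈ insert v I, ∀ i ∈ S u, wb u i ≤ bmax / Real.sqrt ((S u).card : ℝ))
    (hwb2 : ∀ u ∈ insert v I, ∑ i ∈ S u, (wb u i) ^ 2 = 1)
    (T : Finset A) (hT : T = S v \ I.biUnion S) (ht : 1 ≤ T.card) :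
    ∀ i ∈ T, wFinal (insert v I) S bmin dmax τ α wb i ≤ bmax / Real.sqrt (T.card : ℝ) := by
  intro i hi
  have hTS : T ⊆ S v := hT ▸ Finset.sdiff_subset
  have hcard : T.card ≤ (S v).card := Finset.card_le_card hTS
  have ht' : (1 : ℝ) ≤ T.card := by exact_mod_cast ht
  have htk : (T.card : ℝ) ≤ (S v).card := by exact_mod_cast hcard
  have hub := hwbu v (Finset.mem_insert_self v I) i (hTS hi)
  have honly : ∀ j ∈ T, ∀ u ∈ insert v I, j ∈ S u → u = v := by
    intro j hj u hu hju
    rcases Finset.mem_insert.1 hu with rfl | hu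
    · rfl
    · rw [hT, Finset.mem_sdiff] at hj
      exact absurd (Finset.mem_biUnion.2 ⟨u, hu, hju⟩) hj.2
  set a := adaptSet (insert v I) S bmin dmax with ha
  have hsub : a ⊆ insert v I := Finset.filter_subset _ _
  have hmem : ∀ B : Finset ι, B ⊆ insert v I → v ∈ B → ∀ j ∈ T,
      B.filter (fun u => j ∈ S u) = {v} := by
    intro B hB hvB j hj
    ext u
    simp only [Finset.mem_filter, Finset.mem_singleton]
    constructor
    · rintro ⟨h1, h2⟩
      exact honly j hj u (hB h1) h2
    · rintro rfl
      exact ⟨hvB, hTS hj⟩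
  have hnmem : ∀ B : Finset ι, B ⊆ insert v I → v ∉ B → ∀ j ∈ T,
      B.filter (fun u => j ∈ S u) = ∅ := by
    intro B hB hvB j hj
    refine Finset.filter_eq_empty_iff.2 fun u hu hju => hvB ?_
    exact honly j hj u (hB hu) hju ▸ hu
  by_cases hva : v ∈ a
  · have hkd : ((S v).card : ℝ) ≤ dmax := (Finset.mem_filter.1 hva).2.2
    have hinit : ∀ j ∈ T, wInit (insert v I) S bmin dmax j = 1 / ((S v).card : ℝ) := by
      intro j hj
      rw [wInit, ← ha, hmem a hsub hva j hj, Finset.sum_singleton]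
    have hinitτ : ∀ j ∈ T, wInit (insert v I) S bmin dmax j ≤ τ := by
      intro j hj
      rw [hinit j hj, div_le_iff₀ (by linarith)]
      nlinarith
    have he := eUser_le (insert v I) S bmin dmax (by linarith : (0 : ℝ) ≤ τ) hTS hinitτ
    have hw : wFinal (insert v I) S bmin dmax τ α wb i =
        wb v i + α * eUser (insert v I) S bmin dmax τ v / dmax := by
      rw [wFinal, wTrunc, min_eq_left (hinitτ i hi), hinit i hi, wReroute, ← ha,
        hmem a hsub hva i hi, hnmem (insert v I \ a) Finset.sdiff_subset (by simp [hva]) i hi]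
      simp only [Finset.sum_singleton, Finset.sum_empty]
      ring
    have hsd : 2 ≤ √dmax := Real.le_sqrt_of_sq_le (by linarith)
    have hα0 : 0 ≤ α := by
      have : 1 / (2 * √dmax) ≤ 1 / 2 := one_div_le_one_div_of_le (by norm_num) (by linarith)
      linarith
    have hα1 : α ≤ 1 := by
      have : 0 ≤ 1 / (2 * √dmax) := by positivity
      linarith
    have hgap := sqrt_gap ht' htk hkd hdmax
    have hb0 : 0 ≤ (((S v).card : ℝ) - T.card) / (S v).card :=
      div_nonneg (by linarith) (by linarith)
    have hre : α * eUser (insert v I) S bmin dmax τ v / dmax ≤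
        (((S v).card : ℝ) - T.card) / (S v).card / dmax := by
      refine div_le_div_of_nonneg_right ?_ (by linarith)
      nlinarith [mul_le_mul_of_nonneg_left he hα0]
    have hpos : 0 ≤ 1 / √(T.card : ℝ) - 1 / √((S v).card : ℝ) :=
      (div_nonneg hb0 (by linarith)).trans hgap
    have hscale : bmax / √(T.card : ℝ) - bmax / √((S v).card : ℝ) =
        bmax * (1 / √(T.card : ℝ) - 1 / √((S v).card : ℝ)) := by ring
    rw [hw]
    nlinarith [mul_le_mul_of_nonneg_right hbmax hpos]
  · have hw : wFinal (insert v I) S bmin dmax τ α wb i = wb v i := by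
      rw [wFinal, wTrunc, wInit, wReroute, ← ha, hnmem a hsub hva i hi,
        hmem (insert v I \ a) Finset.sdiff_subset (by simp [hva]) i hi]
      simp only [Finset.sum_singleton, Finset.sum_empty]
      rw [min_eq_left (by linarith)]
      ring
    rw [hw]
    refine hub.trans (div_le_div_of_nonneg_left (by linarith) ?_ (Real.sqrt_le_sqrt htk))
    exact Real.sqrt_pos.2 (by linarith)
end

section
/- The ℓ2 sensitivity of the MAD weighting algorithm is at most 1: for any input and any neighboring input obtained by adding one new user v, one has √( Σ_{i ∈ (∪_{u ∈ I} S_u) ∪ S_v} (w'(i) − w(i))² ) ≤ 1, where w(i) is taken to be 0 for items i ∉ ∪_{u ∈ I} S_u. -/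
/-!
Write `k = |S_v|`. A non-adaptive new user changes the weights exactly by the unit vector `w_b^v`,
so the substance is the adaptive case `1/b_min² ≤ k ≤ d_max`. Let
`y_i = w'_init(i) r'(i) - w_init(i) r(i) ∈ [0, 1/k]` be the growth of the truncated excess at
`i ∈ S_v`, and `Y = ∑ y_i`. On `S_v` the weight grows by `w_b^v(i) - y_i ≥ 0`, and everywhere it
also grows by a rerouted amount `R_i ≥ 0`. The total growth of the `e_u` (with `e'_v` included)
is exactly `Y` (`excess_growth`); hence `R_i ≤ α Y / d_max`, because an item receives at most one
share `α (e'_u - e_u) / d_max` from each user, and `∑ R_i ≤ α Y`, because an adaptive user has at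
most `d_max` items.

These bounds give (`core_bound`)
`‖w_b^v - y + R‖² ≤ 1 - 2 b_min Y/√k + Y/k + 2 (αY/d_max)(√k - Y) + α² Y²/d_max`,
where `∑_{S_v} w_b^v ≤ √k` by Cauchy-Schwarz. Since `0 ≤ α ≤ 2`, the terms quadratic in `Y` are
non-positive in total. With `s = 1/√k`, `t = 1/√d_max` and `α = b_min - t/2`, the coefficient
of `Y`, multiplied by `s`, is `(s - t)(s² + st + t² - 2 b_min (s + t))`, which is non-positive
because `t ≤ s ≤ b_min` (`scalar_bound`).
-/

open Finset

theorem scalar_bound {b s t : ℝ} (ht : 0 < t) (hts : t ≤ s) (hsb : s ≤ b) :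
    -2 * b * s + s ^ 2 + 2 * (b - t / 2) * (t ^ 2 / s) ≤ 0 := by
  have hs : 0 < s := lt_of_lt_of_le ht hts
  have h : -2 * b * s + s ^ 2 + 2 * (b - t / 2) * (t ^ 2 / s)
      = ((s - t) * (s ^ 2 + s * t + t ^ 2 - 2 * b * (s + t))) / s := by
    field_simp
    ring
  rw [h]
  apply div_nonpos_of_nonpos_of_nonneg _ hs.le
  apply mul_nonpos_of_nonneg_of_nonpos (by linarith)
  nlinarith [mul_nonneg hs.le (sub_nonneg.2 hsb), mul_nonneg ht.le (sub_nonneg.2 hsb),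
    mul_nonneg ht.le (sub_nonneg.2 hts), mul_pos hs ht]

/-- The `ℓ²` estimate for an adaptive user with item set `T`: a unit vector `a` on `T`, lowered by
`y` and raised by a vector `R` with small `ℓ¹` and `ℓ^∞` norms, keeps norm at most `1`. -/
theorem core_bound {A : Type*} [DecidableEq A] {U T : Finset A} (hTU : T ⊆ U)
    {a y R : A → ℝ} {b d α Y : ℝ} (hT : T.Nonempty) (hd : 4 ≤ d) (hb1 : 1 / 2 ≤ b) (hb2 : b ≤ 1)
    (hα : α = b - 1 / (2 * Real.sqrt d))
    (hbk : 1 ≤ b ^ 2 * (T.card : ℝ)) (hkd : (T.card : ℝ) ≤ d)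
    (ha2 : ∑ i ∈ T, a i ^ 2 = 1)
    (hab : ∀ i ∈ T, b / Real.sqrt (T.card : ℝ) ≤ a i)
    (hy0 : ∀ i ∈ T, 0 ≤ y i) (hyk : ∀ i ∈ T, y i ≤ 1 / (T.card : ℝ))
    (hY : Y = ∑ i ∈ T, y i)
    (hR0 : ∀ i ∈ U, 0 ≤ R i) (hRsup : ∀ i ∈ U, R i ≤ α * Y / d) (hRsum : ∑ i ∈ U, R i ≤ α * Y) :
    ∑ i ∈ U, ((if i ∈ T then a i - y i else 0) + R i) ^ 2 ≤ 1 := by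
  have hk : (0 : ℝ) < T.card := by exact_mod_cast hT.card_pos
  have hdpos : 0 < d := by linarith
  set q := Real.sqrt (T.card : ℝ) with hq
  set p := Real.sqrt d with hp
  have hq0 : 0 < q := Real.sqrt_pos.2 hk
  have hp0 : 0 < p := Real.sqrt_pos.2 hdpos
  have hqq : q ^ 2 = T.card := Real.sq_sqrt hk.le
  have hpp : p ^ 2 = d := Real.sq_sqrt hdpos.le
  have hqp : q ≤ p := Real.sqrt_le_sqrt hkd
  have hp2 : 2 ≤ p := by nlinarith
  have hbq : 1 ≤ b * q := by
    by_contra! h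
    rw [← hqq] at hbk
    nlinarith [mul_pos (by linarith : 0 < b) hq0]
  have hα' : α = b - (1 / p) / 2 := by rw [hα]; field_simp
  have hp1 : 1 / p ≤ 1 / 2 := one_div_le_one_div_of_le (by norm_num) hp2
  have hp10 : 0 < 1 / p := by positivity
  have hα0 : 0 ≤ α := by rw [hα']; linarith
  have hα2 : α ≤ 1 := by rw [hα']; linarith
  have hY0 : 0 ≤ Y := by rw [hY]; exact sum_nonneg hy0
  have hM0 : 0 ≤ α * Y / d := by positivity
  have hx0 : ∀ i ∈ T, 0 ≤ a i - y i := by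
    intro i hi
    have h1 := hab i hi
    have h2 := hyk i hi
    have h3 : 1 / (T.card : ℝ) ≤ b / q := by
      rw [← hqq, div_le_div_iff₀ (by positivity) hq0]
      nlinarith
    linarith
  have hRR : ∑ i ∈ U, R i ^ 2 ≤ (α * Y / d) * (α * Y) := by
    calc ∑ i ∈ U, R i ^ 2 ≤ ∑ i ∈ U, (α * Y / d) * R i := by
          apply sum_le_sum
          intro i hi
          rw [sq]
          exact mul_le_mul_of_nonneg_right (hRsup i hi) (hR0 i hi)
      _ = (α * Y / d) * ∑ i ∈ U, R i := by rw [mul_sum]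
      _ ≤ _ := mul_le_mul_of_nonneg_left hRsum hM0
  have hasum : ∑ i ∈ T, a i ≤ q := by
    apply Real.le_sqrt_of_sq_le
    have := sq_sum_le_card_mul_sum_sq (s := T) (f := a)
    rwa [ha2, mul_one] at this
  have hxR : ∑ i ∈ T, (a i - y i) * R i ≤ (α * Y / d) * (q - Y) := by
    calc ∑ i ∈ T, (a i - y i) * R i ≤ ∑ i ∈ T, (a i - y i) * (α * Y / d) := by
          apply sum_le_sum
          intro i hi
          exact mul_le_mul_of_nonneg_left (hRsup i (hTU hi)) (hx0 i hi)
      _ = (α * Y / d) * (∑ i ∈ T, a i - Y) := by rw [← sum_mul, sum_sub_distrib, hY]; ring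
      _ ≤ _ := mul_le_mul_of_nonneg_left (by linarith) hM0
  have hay : (b / q) * Y ≤ ∑ i ∈ T, a i * y i := by
    rw [hY, mul_sum]
    exact sum_le_sum fun i hi => mul_le_mul_of_nonneg_right (hab i hi) (hy0 i hi)
  have hyy : ∑ i ∈ T, y i ^ 2 ≤ (1 / q ^ 2) * Y := by
    rw [hY, mul_sum, hqq]
    apply sum_le_sum
    intro i hi
    rw [sq]
    exact mul_le_mul_of_nonneg_right (hyk i hi) (hy0 i hi)
  have hexp : ∑ i ∈ U, ((if i ∈ T then a i - y i else 0) + R i) ^ 2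
      = (∑ i ∈ T, a i ^ 2 - 2 * ∑ i ∈ T, a i * y i + ∑ i ∈ T, y i ^ 2)
        + 2 * ∑ i ∈ T, (a i - y i) * R i + ∑ i ∈ U, R i ^ 2 := by
    have h1 : ∀ i ∈ U, ((if i ∈ T then a i - y i else 0) + R i) ^ 2
        = (if i ∈ T then (a i - y i) ^ 2 + 2 * ((a i - y i) * R i) else 0) + R i ^ 2 := by
      intro i _
      split_ifs <;> ring
    rw [sum_congr rfl h1, sum_add_distrib, sum_ite_mem, inter_eq_right.2 hTU, sum_add_distrib,
      ← mul_sum]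
    congr 2
    rw [mul_sum, ← sum_sub_distrib, ← sum_add_distrib]
    exact sum_congr rfl fun i _ => by ring
  have hs := scalar_bound (b := b) (s := 1 / q) (t := 1 / p) hp10
    (one_div_le_one_div_of_le hq0 hqp) (by rw [div_le_iff₀ hq0]; exact hbq)
  rw [← hα'] at hs
  have hs' : -2 * (b / q) + 1 / q ^ 2 + 2 * (α * q / d) ≤ 0 := by
    have : -2 * (b / q) + 1 / q ^ 2 + 2 * (α * q / d)
        = -2 * b * (1 / q) + (1 / q) ^ 2 + 2 * α * ((1 / p) ^ 2 / (1 / q)) := by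
      rw [← hpp]
      field_simp
    rw [this]; exact hs
  have hfin := mul_le_mul_of_nonneg_right hs' hY0
  have hquad : (α * Y / d) * (α * Y) - 2 * ((α * Y / d) * Y) ≤ 0 := by
    have : (α * Y / d) * (α * Y) - 2 * ((α * Y / d) * Y) = -((α * Y / d) * (Y * (2 - α))) := by ring
    rw [this, neg_nonpos]
    exact mul_nonneg hM0 (mul_nonneg hY0 (by linarith))
  have hlin : 2 * ((α * Y / d) * (q - Y)) = 2 * (α * q / d) * Y - 2 * ((α * Y / d) * Y) := by ring
  rw [hexp, ha2]
  linarith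

theorem adaptSet_insert_of_not {ι A : Type*} [DecidableEq ι]
    (I : Finset ι) (S : ι → Finset A) (v : ι) (bmin dmax : ℝ)
    (h : ¬ (⌈1 / bmin ^ 2⌉₊ ≤ (S v).card ∧ ((S v).card : ℝ) ≤ dmax)) :
    adaptSet (insert v I) S bmin dmax = adaptSet I S bmin dmax := by
  unfold adaptSet
  rw [filter_insert, if_neg h]

theorem adaptSet_insert_of {ι A : Type*} [DecidableEq ι]
    (I : Finset ι) (S : ι → Finset A) (v : ι) (bmin dmax : ℝ)
    (h : ⌈1 / bmin ^ 2⌉₊ ≤ (S v).card ∧ ((S v).card : ℝ) ≤ dmax) :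
    adaptSet (insert v I) S bmin dmax = insert v (adaptSet I S bmin dmax) := by
  unfold adaptSet
  rw [filter_insert, if_pos h]

theorem sum_filter_insert_mem {ι A : Type*} [DecidableEq ι] [DecidableEq A]
    (D : Finset ι) (S : ι → Finset A) {v : ι} (hv : v ∉ D)
    (f : ι → ℝ) (i : A) :
    ∑ u ∈ (insert v D).filter (fun u => i ∈ S u), f u
      = ∑ u ∈ D.filter (fun u => i ∈ S u), f u + if i ∈ S v then f v else 0 := by
  rw [sum_filter, sum_insert hv, ← sum_filter, add_comm]

theorem wInit_nonneg {ι A : Type*} [DecidableEq A]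
    (I : Finset ι) (S : ι → Finset A) (bmin dmax : ℝ) (i : A) :
    0 ≤ wInit I S bmin dmax i :=
  sum_nonneg fun _ _ => by positivity

theorem wInit_mul_rFrac {ι A : Type*} [DecidableEq A]
    (I : Finset ι) (S : ι → Finset A) (bmin dmax : ℝ) {τ : ℝ} (hτ : 1 ≤ τ)
    (i : A) : wInit I S bmin dmax i * rFrac I S bmin dmax τ i
      = wInit I S bmin dmax i - wTrunc I S bmin dmax τ i := by
  unfold rFrac
  split_ifs with h
  · field_simp
  · have h0 : wInit I S bmin dmax i = 0 := le_antisymm (not_lt.1 h) (wInit_nonneg ..)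
    rw [wTrunc, h0, min_eq_left (by linarith)]
    ring

theorem rFrac_nonneg {ι A : Type*} [DecidableEq A]
    (I : Finset ι) (S : ι → Finset A) (bmin dmax τ : ℝ) (i : A) :
    0 ≤ rFrac I S bmin dmax τ i := by
  unfold rFrac
  split_ifs with h
  · exact div_nonneg (sub_nonneg.2 (min_le_left _ _)) h.le
  · exact le_rfl

/-- The excess fraction depends only on the initial weight, and is nondecreasing in it. -/
theorem rFrac_mono {ι A : Type*} [DecidableEq A]
    {I J : Finset ι} {S : ι → Finset A} {bmin dmax τ : ℝ} (hτ : 1 ≤ τ) {i : A}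
    (h : wInit I S bmin dmax i ≤ wInit J S bmin dmax i) :
    rFrac I S bmin dmax τ i ≤ rFrac J S bmin dmax τ i := by
  by_cases h0 : 0 < wInit I S bmin dmax i
  · have h1 := lt_of_lt_of_le h0 h
    simp only [rFrac, if_pos h0, if_pos h1, wTrunc]
    rw [div_le_div_iff₀ h0 h1]
    rcases min_cases (wInit I S bmin dmax i) τ with ⟨e, e'⟩ | ⟨e, e'⟩ <;>
    rcases min_cases (wInit J S bmin dmax i) τ with ⟨f, f'⟩ | ⟨f, f'⟩ <;> rw [e, f] <;> nlinarith
  · conv_lhs => rw [rFrac, if_neg h0]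
    exact rFrac_nonneg ..

/-- The growth of the `e_u`, summed over all adaptive users including the new one, equals the
growth of the truncated excess `w_init r` on the items of the new user. -/
theorem excess_growth {ι A : Type*} [DecidableEq A]
    (D : Finset ι) (S : ι → Finset A) (v : ι) (w w' r r' : A → ℝ)
    (hw : ∀ i, w i = ∑ u ∈ D.filter (fun u => i ∈ S u), (1 : ℝ) / (S u).card)
    (hw' : ∀ i ∈ S v, w' i = w i + 1 / (S v).card)
    (hr : ∀ i, i ∉ S v → r' i = r i) :
    ∑ u ∈ D, (1 / ((S u).card : ℝ) * ∑ i ∈ S u, r' i - 1 / ((S u).card : ℝ) * ∑ i ∈ S u, r i)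
        + 1 / ((S v).card : ℝ) * ∑ i ∈ S v, r' i
      = ∑ i ∈ S v, (w' i * r' i - w i * r i) := by
  have h1 : ∀ u ∈ D, 1 / ((S u).card : ℝ) * ∑ i ∈ S u, r' i
        - 1 / ((S u).card : ℝ) * ∑ i ∈ S u, r i
      = ∑ i ∈ S v, if i ∈ S u then 1 / ((S u).card : ℝ) * (r' i - r i) else 0 := by
    intro u _
    rw [← mul_sub, ← sum_sub_distrib, mul_sum, sum_ite_mem]
    symm
    apply sum_subset inter_subset_right
    intro i hi hi'
    have : i ∉ S v := fun h => hi' (mem_inter.2 ⟨h, hi⟩)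
    rw [hr i this, sub_self, mul_zero]
  rw [sum_congr rfl h1, sum_comm, mul_sum, ← sum_add_distrib]
  apply sum_congr rfl
  intro i hi
  rw [← sum_filter, ← sum_mul, ← hw, hw' i hi]
  ring

/-- **ℓ2 sensitivity of MAD is at most 1.** For any input and any neighboring input obtained by
adding one new user `v`, `√(Σ_{i ∈ (∪_{u ∈ I} S_u) ∪ S_v} (w'(i) − w(i))²) ≤ 1` (the weight
`w(i)` vanishes automatically for items outside `∪_{u ∈ I} S_u`). -/
theorem mad_l2_sensitivity {ι A : Type*} [DecidableEq ι] [DecidableEq A]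
    (I : Finset ι) (S : ι → Finset A) (v : ι) (hv : v ∉ I)
    (hne : ∀ u ∈ insert v I, (S u).Nonempty)
    (τ dmax bmin bmax α : ℝ)
    (hτ : 1 ≤ τ) (hdmax : 4 ≤ dmax) (hbmin1 : 1 / 2 ≤ bmin) (hbmin2 : bmin ≤ 1)
    (hbmax : 1 ≤ bmax) (hα : α = bmin - 1 / (2 * Real.sqrt dmax))
    (wb : ι → A → ℝ)
    (hwb0 : ∀ u ∈ insert v I, ∀ i, i ∉ S u → wb u i = 0)
    (hwbl : ∀ u ∈ insert v I, ∀ i ∈ S u, bmin / Real.sqrt ((S u).card : ℝ) ≤ wb u i)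
    (hwbu : ∀ u ∈ insert v I, ∀ i ∈ S u, wb u i ≤ bmax / Real.sqrt ((S u).card : ℝ))
    (hwb2 : ∀ u ∈ insert v I, ∑ i ∈ S u, (wb u i) ^ 2 = 1) :
    Real.sqrt (∑ i ∈ I.biUnion S ∪ S v,
        (wFinal (insert v I) S bmin dmax τ α wb i - wFinal I S bmin dmax τ α wb i) ^ 2) ≤ 1 := by
  rw [Real.sqrt_le_one]
  have hSv := hne v (mem_insert_self v I)
  by_cases had : ⌈1 / bmin ^ 2⌉₊ ≤ (S v).card ∧ ((S v).card : ℝ) ≤ dmax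
  swap
  · -- A non-adaptive user leaves truncation and rerouting unchanged.
    have hA := adaptSet_insert_of_not I S v bmin dmax had
    have hvA : v ∉ I \ adaptSet I S bmin dmax := fun h => hv (mem_sdiff.1 h).1
    have hvA' : v ∉ adaptSet I S bmin dmax := fun h => hv (mem_filter.1 h).1
    have hd : ∀ i, wFinal (insert v I) S bmin dmax τ α wb i - wFinal I S bmin dmax τ α wb i
        = if i ∈ S v then wb v i else 0 := by
      intro i
      have hI : wInit (insert v I) S bmin dmax = wInit I S bmin dmax := by
        funext j; rw [wInit, wInit, hA]
      have hT : wTrunc (insert v I) S bmin dmax τ = wTrunc I S bmin dmax τ := by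
        funext j; rw [wTrunc, wTrunc, hI]
      have hr : rFrac (insert v I) S bmin dmax τ = rFrac I S bmin dmax τ := by
        funext j; rw [rFrac, rFrac, hI, hT]
      have he : eUser (insert v I) S bmin dmax τ = eUser I S bmin dmax τ := by
        funext u; rw [eUser, eUser, hr]
      have hR : wReroute (insert v I) S bmin dmax τ α = wReroute I S bmin dmax τ α := by
        funext j; rw [wReroute, wReroute, hA, he]
      rw [wFinal, wFinal, hT, hR, hA, insert_sdiff_of_notMem _ hvA', sum_filter_insert_mem _ S hvA]
      ring
    simp only [hd, ite_pow]
    rw [← hwb2 v (mem_insert_self v I)]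
    simp only [ne_eq, OfNat.ofNat_ne_zero, not_false_eq_true, zero_pow]
    rw [sum_ite_mem, inter_eq_right.2 subset_union_right]
  · have hA := adaptSet_insert_of I S v bmin dmax had
    obtain ⟨hk1, hk2⟩ := had
    set D := adaptSet I S bmin dmax with hD
    have hDI : D ⊆ I := filter_subset _ _
    have hvD : v ∉ D := fun h => hv (hDI h)
    have hDd : ∀ u ∈ D, ((S u).card : ℝ) ≤ dmax := fun u hu => (mem_filter.1 hu).2.2
    have hdpos : 0 < dmax := by linarith
    set U := I.biUnion S ∪ S v with hU
    have hSU : ∀ u ∈ D, S u ⊆ U := fun u hu =>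
      (subset_biUnion_of_mem S (hDI hu)).trans subset_union_left
    set w := wInit I S bmin dmax with hw
    set w' := wInit (insert v I) S bmin dmax with hw'
    set r := rFrac I S bmin dmax τ with hr
    set r' := rFrac (insert v I) S bmin dmax τ with hr'
    set e := eUser I S bmin dmax τ with he
    set e' := eUser (insert v I) S bmin dmax τ with he'
    have hww : ∀ i, w' i = w i + if i ∈ S v then (1 : ℝ) / (S v).card else 0 := by
      intro i
      rw [hw', hw, wInit, wInit, hA, sum_filter_insert_mem _ S hvD]
    have hw0 : ∀ i, 0 ≤ w i := fun i => wInit_nonneg I S bmin dmax i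
    have hkpos : (0 : ℝ) < (S v).card := by exact_mod_cast hSv.card_pos
    have hwle : ∀ i, w i ≤ w' i := by
      intro i
      rw [hww]
      split_ifs
      · have : (0 : ℝ) < 1 / (S v).card := by positivity
        linarith
      · simp
    have hrle : ∀ i, r i ≤ r' i := fun i => rFrac_mono hτ (hwle i)
    have hr'0 : ∀ i, 0 ≤ r' i := fun i => rFrac_nonneg (insert v I) S bmin dmax τ i
    have hreq : ∀ i, i ∉ S v → r' i = r i := by
      intro i hi
      have h : w' i = w i := by rw [hww, if_neg hi, add_zero]
      exact le_antisymm (rFrac_mono hτ h.le) (hrle i)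
    have hwr : ∀ i, w i * r i = w i - wTrunc I S bmin dmax τ i := fun i =>
      wInit_mul_rFrac I S bmin dmax hτ i
    have hwr' : ∀ i, w' i * r' i = w' i - wTrunc (insert v I) S bmin dmax τ i := fun i =>
      wInit_mul_rFrac (insert v I) S bmin dmax hτ i
    have hce : ∀ u, 0 ≤ e' u - e u := by
      intro u
      rw [he, he', eUser, eUser, ← mul_sub, ← sum_sub_distrib]
      exact mul_nonneg (by positivity) (sum_nonneg fun i _ => sub_nonneg.2 (hrle i))
    have hev : 0 ≤ e' v := by
      rw [he', eUser]
      exact mul_nonneg (by positivity) (sum_nonneg fun i _ => hr'0 i)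
    have hgrow : ∑ u ∈ D, (e' u - e u) + e' v = ∑ i ∈ S v, (w' i * r' i - w i * r i) :=
      excess_growth D S v w w' r r' (fun i => rfl) (fun i hi => by rw [hww, if_pos hi]) hreq
    have hα0 : 0 ≤ α := by
      have hp : 2 ≤ Real.sqrt dmax := Real.le_sqrt_of_sq_le (by linarith)
      have : 1 / (2 * Real.sqrt dmax) ≤ 1 / 2 :=
        one_div_le_one_div_of_le (by norm_num) (by linarith)
      linarith
    set R : A → ℝ := fun i => (α / dmax) *
      (∑ u ∈ D.filter (fun u => i ∈ S u), (e' u - e u) + if i ∈ S v then e' v else 0) with hR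
    have hαd : 0 ≤ α / dmax := by positivity
    have hdiff : ∀ i, wFinal (insert v I) S bmin dmax τ α wb i - wFinal I S bmin dmax τ α wb i
        = (if i ∈ S v then wb v i - (w' i * r' i - w i * r i) else 0) + R i := by
      intro i
      have hsd : insert v I \ insert v D = I \ D := by
        ext u
        simp only [mem_sdiff, mem_insert]
        constructor
        · tauto
        · rintro ⟨h1, h2⟩
          refine ⟨Or.inr h1, ?_⟩
          rintro (rfl | h)
          · exact hv h1
          · exact h2 h
      have hre : wReroute (insert v I) S bmin dmax τ α i - wReroute I S bmin dmax τ α i = R i := by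
        rw [wReroute, wReroute, hA, sum_filter_insert_mem _ S hvD, hR]
        simp only [mul_add, mul_sum, mul_sub, sum_sub_distrib]
        have h1 : ∀ x : ℝ, α * x / dmax = α / dmax * x := fun x => by ring
        simp only [h1, mul_ite, mul_zero]
        ring
      rw [← hre, wFinal, wFinal, hA, hsd, sum_filter_insert_mem _ S hvD, hwr, hwr', hww]
      split_ifs with hi
      · ring
      · have ht : wTrunc (insert v I) S bmin dmax τ i = wTrunc I S bmin dmax τ i := by
          have h : w' i = w i := by rw [hww, if_neg hi, add_zero]
          rw [wTrunc, wTrunc, ← hw, ← hw', h]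
        rw [ht]
        ring
    rw [sum_congr rfl fun i _ => by rw [hdiff i]]
    have hb0 : 0 < bmin := by linarith
    refine core_bound (b := bmin) (d := dmax) (α := α) subset_union_right hSv hdmax hbmin1 hbmin2
      hα ?_ hk2 (hwb2 v (mem_insert_self v I)) (hwbl v (mem_insert_self v I)) ?_ ?_ rfl ?_ ?_ ?_
    · have h := Nat.ceil_le.1 hk1
      rw [div_le_iff₀ (by positivity)] at h
      linarith
    · intro i _
      exact sub_nonneg.2 (mul_le_mul (hwle i) (hrle i) (rFrac_nonneg ..) ((hw0 i).trans (hwle i)))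
    · intro i hi
      rw [hwr, hwr']
      have h1 : wTrunc I S bmin dmax τ i ≤ wTrunc (insert v I) S bmin dmax τ i :=
        min_le_min_right τ (hwle i)
      have h2 := hww i
      rw [if_pos hi] at h2
      linarith
    · intro i _
      refine mul_nonneg hαd (add_nonneg (sum_nonneg fun u _ => hce u) ?_)
      split_ifs
      exacts [hev, le_rfl]
    · intro i _
      rw [← hgrow, hR, mul_div_right_comm]
      refine mul_le_mul_of_nonneg_left (add_le_add ?_ ?_) hαd
      · exact sum_le_sum_of_subset_of_nonneg (filter_subset _ _) fun u _ _ => hce u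
      · split_ifs
        exacts [le_rfl, hev]
    · -- Each user returns its share to at most `dmax` items.
      have h1 : ∑ i ∈ U, ∑ u ∈ D.filter (fun u => i ∈ S u), (e' u - e u)
          ≤ dmax * ∑ u ∈ D, (e' u - e u) := by
        simp only [sum_filter]
        rw [sum_comm, mul_sum]
        apply sum_le_sum
        intro u hu
        rw [sum_ite_mem, inter_eq_right.2 (hSU u hu), sum_const, nsmul_eq_mul]
        exact mul_le_mul_of_nonneg_right (hDd u hu) (hce u)
      have h2 : ∑ i ∈ U, (if i ∈ S v then e' v else 0) ≤ dmax * e' v := by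
        rw [sum_ite_mem, inter_eq_right.2 subset_union_right, sum_const, nsmul_eq_mul]
        exact mul_le_mul_of_nonneg_right hk2 hev
      rw [hR, ← mul_sum, sum_add_distrib, ← hgrow]
      calc _ ≤ α / dmax * (dmax * (∑ u ∈ D, (e' u - e u) + e' v)) :=
            mul_le_mul_of_nonneg_left (by rw [mul_add]; exact add_le_add h1 h2) hαd
        _ = _ := by field_simp
end

section
/- The excess weight created by a new user is between 0 and 1: the quantity γ = Σ_{i ∈ (∪_{u ∈ I} S_u) ∪ S_v} [ (w'_init(i) − w'_trunc(i)) − (w_init(i) − w_trunc(i)) ] satisfies 0 ≤ γ ≤ 1, where the unprimed quantities are taken to be 0 on items outside ∪_{u ∈ I} S_u. -/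
/-!
The excess `x - min x τ = max (x - τ) 0` is a monotone, 1-Lipschitz function of `x`. Adding the
user `v` raises the initial weight of each item `i` by some `δ i ≥ 0`, so the excess of `i` grows
by between `0` and `δ i`. The user hands out at most one unit of initial weight: `δ i` is
`1 / |S v|` on `S v` if `v` is adaptive, and `0` otherwise. Hence `0 ≤ γ ≤ ∑ i, δ i ≤ 1`.
The increment `δ` is computed in `wInit_insert`.
-/

open Finset

/-- A new user leaves the adaptivity of the others unchanged, so it only adds its own share
`1 / |S v|` to the initial weights of its items, and only if it is adaptive itself. -/
theorem wInit_insert {ι A : Type*} [DecidableEq ι] [DecidableEq A]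
    (I : Finset ι) (S : ι → Finset A) (v : ι) (hv : v ∉ I) (bmin dmax : ℝ) (i : A) :
    wInit (insert v I) S bmin dmax i = wInit I S bmin dmax i +
      if v ∈ adaptSet (insert v I) S bmin dmax ∧ i ∈ S v then 1 / ((S v).card : ℝ) else 0 := by
  simp only [wInit, adaptSet, Finset.sum_filter, Finset.sum_insert hv, Finset.mem_filter,
    Finset.mem_insert_self, true_and]
  simp only [add_comm, ite_and]

/-- **The excess weight created by a new user is between 0 and 1.** The quantity
`γ = Σ_{i ∈ (∪_{u ∈ I} S_u) ∪ S_v} [(w'_init(i) − w'_trunc(i)) − (w_init(i) − w_trunc(i))]`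
satisfies `0 ≤ γ ≤ 1` (the unprimed quantities vanish automatically on items outside
`∪_{u ∈ I} S_u`). -/
theorem mad_excess_bounds {ι A : Type*} [DecidableEq ι] [DecidableEq A]
    (I : Finset ι) (S : ι → Finset A) (v : ι) (hv : v ∉ I)
    (hne : ∀ u ∈ insert v I, (S u).Nonempty)
    (τ dmax bmin α : ℝ)
    (hτ : 1 ≤ τ) (hdmax : 4 ≤ dmax) (hbmin1 : 1 / 2 ≤ bmin) (hbmin2 : bmin ≤ 1)
    (hα : α = bmin - 1 / (2 * Real.sqrt dmax))
    (γ : ℝ)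
    (hγ : γ = ∑ i ∈ I.biUnion S ∪ S v,
      ((wInit (insert v I) S bmin dmax i - wTrunc (insert v I) S bmin dmax τ i) -
        (wInit I S bmin dmax i - wTrunc I S bmin dmax τ i))) :
    0 ≤ γ ∧ γ ≤ 1 := by
  have hcard : (0 : ℝ) < (S v).card := by
    exact_mod_cast (hne v (Finset.mem_insert_self v I)).card_pos
  have hδ : ∀ i, (0 : ℝ) ≤
      if v ∈ adaptSet (insert v I) S bmin dmax ∧ i ∈ S v then 1 / ((S v).card : ℝ) else 0 := by
    intro i
    split_ifs <;> positivity
  have hexcess : ∀ x δ : ℝ, 0 ≤ δ → 0 ≤ (x + δ - min (x + δ) τ) - (x - min x τ) ∧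
      (x + δ - min (x + δ) τ) - (x - min x τ) ≤ δ := by
    intro x δ h
    constructor <;> rcases min_cases (x + δ) τ with h1 | h1 <;>
      rcases min_cases x τ with h2 | h2 <;> linarith
  simp only [wTrunc, wInit_insert I S v hv] at hγ
  rw [hγ]
  refine ⟨Finset.sum_nonneg fun i _ => (hexcess _ _ (hδ i)).1,
    (Finset.sum_le_sum fun i _ => (hexcess _ _ (hδ i)).2).trans ?_⟩
  by_cases hva : v ∈ adaptSet (insert v I) S bmin dmax
  · simp only [hva, true_and]
    rw [← Finset.sum_filter, Finset.filter_mem_eq_inter,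
      Finset.inter_eq_right.mpr Finset.subset_union_right, Finset.sum_const, nsmul_eq_mul,
      mul_one_div_cancel hcard.ne']
  · simp [hva]
end

section
/- Let d ≥ 1 be an integer, b_min ∈ (0,1], and γ ∈ [0,1]. Let w : {1,…,d} → ℝ satisfy w(i) ≥ b_min/√d for all i and Σ_{i=1}^d w(i)² = 1, and let y : {1,…,d} → ℝ satisfy 0 ≤ y(i) ≤ 1/d for all i and Σ_{i=1}^d y(i) = 1 − γ. Then Σ_{i=1}^d (w(i) − 1/d + y(i))² ≤ 1 − 2·b_min·γ/√d + γ/d. -/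
/-- Let `d ≥ 1` be an integer, `b_min ∈ (0,1]`, and `γ ∈ [0,1]`. Let `w : {1,…,d} → ℝ`
satisfy `w(i) ≥ b_min/√d` for all `i` and `Σ w(i)² = 1`, and let `y : {1,…,d} → ℝ` satisfy
`0 ≤ y(i) ≤ 1/d` for all `i` and `Σ y(i) = 1 − γ`. Then
`Σ (w(i) − 1/d + y(i))² ≤ 1 − 2·b_min·γ/√d + γ/d`. -/
theorem user_contribution_l2_bound (d : ℕ) (hd : 1 ≤ d) (bmin γ : ℝ)
    (hb0 : 0 < bmin) (hb1 : bmin ≤ 1) (hγ0 : 0 ≤ γ) (hγ1 : γ ≤ 1)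
    (w y : Fin d → ℝ)
    (hw : ∀ i, bmin / Real.sqrt d ≤ w i) (hw2 : ∑ i, (w i) ^ 2 = 1)
    (hy0 : ∀ i, 0 ≤ y i) (hy1 : ∀ i, y i ≤ 1 / d) (hys : ∑ i, y i = 1 - γ) :
    ∑ i, (w i - 1 / d + y i) ^ 2 ≤ 1 - 2 * bmin * γ / Real.sqrt d + γ / d := by
  have hd0 : (d : ℝ) ≠ 0 := by positivity
  -- With `z i = 1 / d - y i ∈ [0, 1 / d]`, expand `(w i - z i) ^ 2` and use
  -- `w i * z i ≥ (bmin / √d) * z i` and `z i ^ 2 ≤ z i / d`; then sum, as `∑ z i = γ`.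
  have key : ∀ i, (w i - 1 / d + y i) ^ 2
      ≤ (w i) ^ 2 + (1 / d - 2 * (bmin / Real.sqrt d)) * (1 / d - y i) := by
    intro i
    have hz : 0 ≤ 1 / (d : ℝ) - y i := sub_nonneg.2 (hy1 i)
    have h1 := mul_nonneg (sub_nonneg.2 (hw i)) hz
    have h2 := mul_nonneg (hy0 i) hz
    linarith
  have hz : ∑ i, (1 / (d : ℝ) - y i) = γ := by
    rw [Finset.sum_sub_distrib, hys]
    simp [hd0]
  calc ∑ i, (w i - 1 / d + y i) ^ 2
      ≤ ∑ i, ((w i) ^ 2 + (1 / d - 2 * (bmin / Real.sqrt d)) * (1 / d - y i)) :=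
        Finset.sum_le_sum fun i _ => key i
    _ = 1 + (1 / d - 2 * (bmin / Real.sqrt d)) * γ := by
        rw [Finset.sum_add_distrib, ← Finset.mul_sum, hw2, hz]
    _ = 1 - 2 * bmin * γ / Real.sqrt d + γ / d := by ring
end

section
/- For real numbers d_max > 1, b_min ∈ [1/2, 1], and γ ∈ [0,1], with α = b_min − 1/(2√d_max), one has α·γ/√d_max + √(1 − 2·b_min·γ/√d_max + γ/d_max) ≤ 1. -/
/-! With `t = 1 / √dmax ∈ (0, 1)` one has `α = bmin - t / 2`, so the radicand equals
`1 - 2 X` where `X = α γ t` is the first summand. Since `X ≤ 1` and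
`1 - 2 X ≤ (1 - X) ^ 2`, the square root is at most `1 - X`. -/

/-- For real numbers `d_max > 1`, `b_min ∈ [1/2, 1]`, and `γ ∈ [0,1]`, with
`α = b_min − 1/(2√d_max)`, one has
`α·γ/√d_max + √(1 − 2·b_min·γ/√d_max + γ/d_max) ≤ 1`. -/
theorem l2_sensitivity_combination (dmax bmin γ α : ℝ)
    (hdmax : 1 < dmax) (hb1 : 1 / 2 ≤ bmin) (hb2 : bmin ≤ 1)
    (hγ0 : 0 ≤ γ) (hγ1 : γ ≤ 1)
    (hα : α = bmin - 1 / (2 * Real.sqrt dmax)) :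
    α * γ / Real.sqrt dmax +
      Real.sqrt (1 - 2 * bmin * γ / Real.sqrt dmax + γ / dmax) ≤ 1 := by
  obtain ⟨t, ht⟩ : ∃ t, t = 1 / Real.sqrt dmax := ⟨_, rfl⟩
  have hs : 1 < Real.sqrt dmax := by
    rw [Real.lt_sqrt] <;> linarith
  have hs0 : 0 < Real.sqrt dmax := by linarith
  have ht0 : 0 < t := by rw [ht]; positivity
  have ht1 : t < 1 := by rw [ht, div_lt_one hs0]; exact hs
  have ht2 : 1 / dmax = t ^ 2 := by
    rw [ht, div_pow, Real.sq_sqrt (by linarith), one_pow]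
  have hα' : α = bmin - t / 2 := by
    rw [hα, ht]; field_simp
  have hX : α * γ / Real.sqrt dmax = α * γ * t := by rw [ht]; ring
  have hR : 1 - 2 * bmin * γ / Real.sqrt dmax + γ / dmax = 1 - 2 * (α * γ * t) := by
    have h1 : 2 * bmin * γ / Real.sqrt dmax = 2 * bmin * γ * t := by rw [ht]; ring
    have h2 : γ / dmax = γ * t ^ 2 := by rw [← ht2]; ring
    rw [h1, h2, hα']; ring
  have hα1 : α ≤ 1 := by linarith
  have hX1 : α * γ * t ≤ 1 := by
    have hγt : γ * t ≤ 1 := mul_le_one₀ hγ1 ht0.le ht1.le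
    calc α * γ * t = α * (γ * t) := by ring
      _ ≤ 1 * (γ * t) := mul_le_mul_of_nonneg_right hα1 (by positivity)
      _ ≤ 1 := by linarith
  have key : Real.sqrt (1 - 2 * (α * γ * t)) ≤ 1 - α * γ * t :=
    Real.sqrt_le_iff.2 ⟨by linarith, by nlinarith [sq_nonneg (α * γ * t)]⟩
  rw [hX, hR]
  linarith
end

section
/- Stochastic dominance of noised weights: let σ > 0, ρ ∈ ℝ, β ≥ 0, and let μ be the Gaussian probability measure on ℝ with mean 0 and variance σ². Let a, b ∈ ℝ satisfy b ≥ a or b ≥ ρ + βσ. Then μ({z : b + z ≥ ρ}) ≥ min( μ({z : a + z ≥ ρ}), Φ(β) ), where Φ is the cumulative distribution function of the standard Gaussian measure on ℝ. -/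
open ProbabilityTheory MeasureTheory

/-- The cumulative distribution function `Φ` of the standard Gaussian measure on `ℝ`. -/
noncomputable def stdGaussianCDF (x : ℝ) : ℝ :=
  (gaussianReal 0 1 (Set.Iic x)).toReal

/-- **Stochastic dominance of noised weights.** Let `σ > 0`, `ρ ∈ ℝ`, `β ≥ 0`, and let `μ` be
the Gaussian probability measure on `ℝ` with mean `0` and variance `σ²`. If `b ≥ a` or
`b ≥ ρ + βσ`, then `μ({z : b + z ≥ ρ}) ≥ min(μ({z : a + z ≥ ρ}), Φ(β))`. -/
theorem noised_weight_stochastic_dominance (σ ρ β a b : ℝ) (hσ : 0 < σ) (hβ : 0 ≤ β)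
    (hcase : a ≤ b ∨ ρ + β * σ ≤ b) :
    min ((gaussianReal 0 ⟨σ ^ 2, sq_nonneg σ⟩ {z : ℝ | ρ ≤ a + z}).toReal)
        (stdGaussianCDF β) ≤
      (gaussianReal 0 ⟨σ ^ 2, sq_nonneg σ⟩ {z : ℝ | ρ ≤ b + z}).toReal := by
  -- Given explicitly: instance search fails on the variance written as an anonymous constructor.
  have : IsProbabilityMeasure (gaussianReal 0 ⟨σ ^ 2, sq_nonneg σ⟩) :=
    instIsProbabilityMeasureGaussianReal 0 _
  rcases hcase with h | h
  · exact (min_le_left _ _).trans <| ENNReal.toReal_mono (measure_ne_top _ _) <|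
      measure_mono fun z (hz : ρ ≤ a + z) => show ρ ≤ b + z by linarith
  · refine (min_le_right _ _).trans <| ENNReal.toReal_mono (measure_ne_top _ _) ?_
    -- The reflected scaling `x ↦ -σ * x` carries the half-line `Iic β` into `{z | ρ ≤ b + z}`.
    have hmap : gaussianReal 0 ⟨σ ^ 2, sq_nonneg σ⟩ =
        (gaussianReal 0 1).map (fun x => -σ * x) := by
      rw [gaussianReal_map_const_mul, mul_zero, mul_one]
      congr 1
      exact Subtype.ext (neg_sq σ).symm
    rw [hmap, Measure.map_apply (by fun_prop) (measurableSet_le (by fun_prop) (by fun_prop))]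
    refine measure_mono fun x (hx : x ≤ β) => show ρ ≤ b + -σ * x from ?_
    nlinarith [mul_le_mul_of_nonneg_right hx hσ.le]
end
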